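/- Let a, b > 0 and δ > 0, B ≥ 0 be real numbers and Q a natural number. Let d : ℕ → ℝ be a nonnegative sequence and f : ℕ → ℝ a nondecreasing sequence with f(Q) − f(0) ≤ B. Suppose that for every q < Q one has d(q+1) ≤ b·d(q), and that moreover d(q+1) ≤ a·d(q) whenever f(q+1) − f(q) < δ. Then d(Q) ≤ a^Q · (max(b/a, 1))^{⌊B/δ⌋} · d(0). -/

import Mathlib

/-- Combined two-regime iteration with density-drop counting: if `d` is nonnegative with
`d(q+1) ≤ b·d(q)` for all `q < Q` and `d(q+1) ≤ a·d(q)` whenever the nondecreasing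
density `f` satisfies `f(q+1) − f(q) < δ`, and `f(Q) − f(0) ≤ B`, then
`d(Q) ≤ a^Q · (max(b/a,1))^⌊B/δ⌋ · d(0)`. -/
theorem two_regime_with_density_drop (a b δ B : ℝ)
    (ha : 0 < a) (hb : 0 < b) (hδ : 0 < δ) (hB : 0 ≤ B)
    (Q : ℕ) (d f : ℕ → ℝ) (hd : ∀ q, 0 ≤ d q) (hf : Monotone f)
    (htot : f Q - f 0 ≤ B)
    (hstepb : ∀ q < Q, d (q + 1) ≤ b * d q)
    (hstepa : ∀ q < Q, f (q + 1) - f q < δ → d (q + 1) ≤ a * d q) :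
    d Q ≤ a ^ Q * max (b / a) 1 ^ (⌊B / δ⌋₊) * d 0 := by
  have hM1 : (1 : ℝ) ≤ max (b / a) 1 := le_max_right _ _
  have hMb : b ≤ a * max (b / a) 1 := by
    have h : b / a ≤ max (b / a) 1 := le_max_left _ _
    rw [div_le_iff₀ ha] at h
    linarith
  generalize max (b / a) 1 = M at hM1 hMb ⊢
  have key : ∀ q, q ≤ Q → ∃ n : ℕ, (n : ℝ) * δ ≤ f q - f 0 ∧ d q ≤ a ^ q * M ^ n * d 0 := by
    intro q
    induction q with
    | zero => intro _; exact ⟨0, by simp, by simp⟩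
    | succ q ih =>
      intro hq
      obtain ⟨n, hn, hdn⟩ := ih (by omega)
      by_cases h : f (q + 1) - f q < δ
      · refine ⟨n, by linarith [hf (Nat.le_succ q)], ?_⟩
        calc d (q + 1) ≤ a * d q := hstepa q hq h
          _ ≤ a * (a ^ q * M ^ n * d 0) := by gcongr
          _ = _ := by ring
      · refine ⟨n + 1, by push_cast; linarith, ?_⟩
        calc d (q + 1) ≤ b * d q := hstepb q hq
          _ ≤ (a * M) * d q := mul_le_mul_of_nonneg_right hMb (hd q)
          _ ≤ (a * M) * (a ^ q * M ^ n * d 0) := by gcongr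
          _ = _ := by ring
  obtain ⟨n, hn, hdn⟩ := key Q le_rfl
  have hnB : n ≤ ⌊B / δ⌋₊ := Nat.le_floor (by rw [le_div_iff₀ hδ]; linarith)
  have h0 := hd 0
  refine hdn.trans ?_
  gcongr
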